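/- Let q ∈ (0,1) and set τ := −(ln q)/π > 0, so that q = e^{−πτ}. Extend θ₁(·;q) and θ₄(·;q) to complex arguments by their defining series. Then for every y ∈ ℝ: (θ₁(y + iπτ/4; q)² + θ₄(y + iπτ/4; q)²)·θ₄(iπτ/4; q)² = i·q^{−1/4}·e^{−iy}·θ₁(y;q)·θ₄(y;q)·θ₄(0;q)². -/

import Mathlib

noncomputable section

/-- The Jacobi theta function `θ₁(y;q) = 2·Σ_{n≥1} (−1)^{n−1} q^{(n−1/2)²} sin((2n−1)y)`,
extended to complex arguments (the sum below runs over `n : ℕ`, representing the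
index `n + 1 ≥ 1`). -/
def cTheta1 (q : ℝ) (y : ℂ) : ℂ :=
  2 * ∑' n : ℕ, (-1 : ℂ) ^ n * ((q ^ (((n : ℝ) + 1 / 2) ^ 2) : ℝ) : ℂ) *
    Complex.sin ((2 * (n : ℂ) + 1) * y)

/-- The Jacobi theta function `θ₄(y;q) = 1 + 2·Σ_{n≥1} (−1)ⁿ q^{n²} cos(2ny)`,
extended to complex arguments (the sum below runs over `n : ℕ`, representing the
index `n + 1 ≥ 1`). -/
def cTheta4 (q : ℝ) (y : ℂ) : ℂ :=
  1 + 2 * ∑' n : ℕ, (-1 : ℂ) ^ (n + 1) * (q : ℂ) ^ ((n + 1) ^ 2) *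
    Complex.cos (2 * ((n : ℂ) + 1) * y)

/-!
Write `θ₃(z|τ)` for `jacobiTheta₂` and `θ₂(z|τ)` for its companion over the half-integers. Splitting
the double series of `θ₃(x|τ) θ₃(y|τ)` by the parity of `m + n` gives
`θ₃(x|τ) θ₃(y|τ) = θ₃(x+y|2τ) θ₃(x-y|2τ) + θ₂(x+y|2τ) θ₂(x-y|2τ)`, and hence the Landen formulas
`θ₃² + θ₂² = θ₃(z|τ/2) θ₃(0|τ/2)` and `2 θ₃ θ₂ = θ₂(z|τ/2) θ₂(0|τ/2)`. Translation by `τ/4`, half of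
the quasi-period `τ/2`, exchanges `θ₃(·|τ/2)` and `θ₂(·|τ/2)` up to an exponential. So, up to that
exponential, `(θ₃² + θ₂²)(z + τ/4)` and `(θ₃ θ₂)(z)` are proportional functions of `z`, and the
constant is found at `z = 1/2 - τ/4`, because `θ₂(1/2) = 0`. Finally `θ₄(πz)` and `-θ₁(πz)` are
`θ₃(z + 1/2)` and `θ₂(z + 1/2)`.
-/

open Complex
open scoped Real

theorem isCompl_range_add_sub_range_add_one_sub :
    IsCompl (Set.range fun p : ℤ × ℤ ↦ (p.1 + p.2, p.1 - p.2))
      (Set.range fun p : ℤ × ℤ ↦ (p.1 + p.2 + 1, p.1 - p.2)) := by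
  refine IsCompl.of_le ?_ ?_
  · rintro _ ⟨⟨⟨a, b⟩, rfl⟩, ⟨c, d⟩, h⟩
    simp only [Prod.mk.injEq] at h
    omega
  · rintro ⟨m, n⟩ -
    obtain ⟨a, ha | ha⟩ := Int.even_or_odd' (m + n)
    · exact Or.inl ⟨(a, m - a), by ext <;> dsimp only <;> omega⟩
    · exact Or.inr ⟨(a, m - a - 1), by ext <;> dsimp only <;> omega⟩

theorem hasSum_int_prod_of_add_sub {M : Type*} [AddCommMonoid M] [TopologicalSpace M]
    [ContinuousAdd M] {f : ℤ × ℤ → M} {a b : M}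
    (hf_even : HasSum (fun p : ℤ × ℤ ↦ f (p.1 + p.2, p.1 - p.2)) a)
    (hf_odd : HasSum (fun p : ℤ × ℤ ↦ f (p.1 + p.2 + 1, p.1 - p.2)) b) :
    HasSum f (a + b) := by
  have injective_even : Function.Injective fun p : ℤ × ℤ ↦ (p.1 + p.2, p.1 - p.2) := by
    intro p r h
    simp only [Prod.mk.injEq] at h
    ext <;> omega
  have injective_odd : Function.Injective fun p : ℤ × ℤ ↦ (p.1 + p.2 + 1, p.1 - p.2) := by
    intro p r h
    simp only [Prod.mk.injEq] at h
    ext <;> omega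
  exact (injective_even.hasSum_range_iff.2 hf_even).add_isCompl
    isCompl_range_add_sub_range_add_one_sub (injective_odd.hasSum_range_iff.2 hf_odd)

theorem hasSum_mul_prod_complex {ι κ : Type*} {f : ι → ℂ} {g : κ → ℂ} {a b : ℂ}
    (hf : HasSum f a) (hg : HasSum g b) :
    HasSum (fun p : ι × κ ↦ f p.1 * g p.2) (a * b) :=
  hf.mul hg (summable_mul_of_summable_norm hf.summable.norm hg.summable.norm)

/-- Summand of `jacobiThetaHalf`: the summand `jacobiTheta₂_term` at the half-integer `n + 1/2`. -/
def jacobiThetaHalf_term (n : ℤ) (z τ : ℂ) : ℂ :=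
  cexp (2 * π * I * (n + 1 / 2) * z + π * I * (n + 1 / 2) ^ 2 * τ)

/-- The companion of `jacobiTheta₂` summed over the half-integers, that is, the classical
`θ₂(πz|τ)` (whereas `jacobiTheta₂ z τ` is the classical `θ₃(πz|τ)`). -/
def jacobiThetaHalf (z τ : ℂ) : ℂ :=
  ∑' n : ℤ, jacobiThetaHalf_term n z τ

theorem jacobiThetaHalf_term_eq_exp_mul (n : ℤ) (z τ : ℂ) :
    jacobiThetaHalf_term n z τ =
      cexp (π * I * (z + τ / 4)) * jacobiTheta₂_term n (z + τ / 2) τ := by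
  rw [jacobiThetaHalf_term, jacobiTheta₂_term, ← Complex.exp_add]
  ring_nf

theorem jacobiThetaHalf_eq_exp_mul_jacobiTheta₂ (z τ : ℂ) :
    jacobiThetaHalf z τ = cexp (π * I * (z + τ / 4)) * jacobiTheta₂ (z + τ / 2) τ := by
  simp_rw [jacobiThetaHalf, jacobiThetaHalf_term_eq_exp_mul, tsum_mul_left, jacobiTheta₂]

theorem jacobiTheta₂_eq_exp_mul_jacobiThetaHalf (z τ : ℂ) :
    jacobiTheta₂ z τ = cexp (π * I * (z + τ / 4)) * jacobiThetaHalf (z + τ / 2) τ := by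
  rw [jacobiThetaHalf_eq_exp_mul_jacobiTheta₂, add_assoc z (τ / 2) (τ / 2), add_halves,
    jacobiTheta₂_add_left', ← mul_assoc, ← mul_assoc, ← Complex.exp_add, ← Complex.exp_add]
  ring_nf
  simp

theorem hasSum_jacobiThetaHalf_term (z : ℂ) {τ : ℂ} (hτ : 0 < im τ) :
    HasSum (fun n ↦ jacobiThetaHalf_term n z τ) (jacobiThetaHalf z τ) := by
  simp_rw [jacobiThetaHalf_term_eq_exp_mul, jacobiThetaHalf_eq_exp_mul_jacobiTheta₂]
  exact (hasSum_jacobiTheta₂_term _ hτ).mul_left _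

theorem jacobiThetaHalf_half (τ : ℂ) : jacobiThetaHalf (1 / 2) τ = 0 := by
  have odd : jacobiTheta₂ (1 / 2 + τ / 2) τ = -jacobiTheta₂ (1 / 2 + τ / 2) τ :=
    calc jacobiTheta₂ (1 / 2 + τ / 2) τ
      _ = jacobiTheta₂ (-(1 / 2 + τ / 2) + 1 + τ) τ := by ring_nf
      _ = cexp (-π * I * (τ + 2 * (-(1 / 2 + τ / 2) + 1))) * jacobiTheta₂ (1 / 2 + τ / 2) τ := by
        rw [jacobiTheta₂_add_left', jacobiTheta₂_add_left, jacobiTheta₂_neg_left]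
      _ = cexp (-(π * I)) * jacobiTheta₂ (1 / 2 + τ / 2) τ := by ring_nf
      _ = -jacobiTheta₂ (1 / 2 + τ / 2) τ := by rw [exp_neg_pi_mul_I, neg_one_mul]
  rw [jacobiThetaHalf_eq_exp_mul_jacobiTheta₂, self_eq_neg.1 odd, mul_zero]

section Duplication

variable {τ : ℂ}

theorem jacobiTheta₂_mul_jacobiTheta₂ (hτ : 0 < im τ) (x y : ℂ) :
    jacobiTheta₂ x τ * jacobiTheta₂ y τ =
      jacobiTheta₂ (x + y) (2 * τ) * jacobiTheta₂ (x - y) (2 * τ) +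
        jacobiThetaHalf (x + y) (2 * τ) * jacobiThetaHalf (x - y) (2 * τ) := by
  have h2τ : 0 < im (2 * τ) := by simpa using hτ
  have even_part := hasSum_mul_prod_complex (hasSum_jacobiTheta₂_term (x + y) h2τ)
    (hasSum_jacobiTheta₂_term (x - y) h2τ)
  have odd_part := hasSum_mul_prod_complex (hasSum_jacobiThetaHalf_term (x + y) h2τ)
    (hasSum_jacobiThetaHalf_term (x - y) h2τ)
  refine (hasSum_mul_prod_complex (hasSum_jacobiTheta₂_term x hτ)
    (hasSum_jacobiTheta₂_term y hτ)).unique (hasSum_int_prod_of_add_sub ?_ ?_)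
  · refine even_part.congr_fun fun p ↦ ?_
    simp only [jacobiTheta₂_term, ← Complex.exp_add]
    push_cast
    ring_nf
  · refine odd_part.congr_fun fun p ↦ ?_
    simp only [jacobiTheta₂_term, jacobiThetaHalf_term, ← Complex.exp_add]
    push_cast
    ring_nf

theorem jacobiThetaHalf_mul_jacobiThetaHalf (hτ : 0 < im τ) (x y : ℂ) :
    jacobiThetaHalf x τ * jacobiThetaHalf y τ =
      jacobiThetaHalf (x + y) (2 * τ) * jacobiTheta₂ (x - y) (2 * τ) +
        jacobiTheta₂ (x + y) (2 * τ) * jacobiThetaHalf (x - y) (2 * τ) := by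
  have exp_mul_exp : cexp (π * I * (x + τ / 4)) * cexp (π * I * (y + τ / 4)) =
      cexp (π * I * (x + y + 2 * τ / 4)) := by
    rw [← Complex.exp_add]
    ring_nf
  have shifted := jacobiTheta₂_mul_jacobiTheta₂ hτ (x + τ / 2) (y + τ / 2)
  rw [show x + τ / 2 + (y + τ / 2) = x + y + 2 * τ / 2 by ring, add_sub_add_right_eq_sub] at shifted
  rw [jacobiThetaHalf_eq_exp_mul_jacobiTheta₂ x, jacobiThetaHalf_eq_exp_mul_jacobiTheta₂ y,
    mul_mul_mul_comm, exp_mul_exp, shifted, jacobiThetaHalf_eq_exp_mul_jacobiTheta₂ (x + y),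
    jacobiTheta₂_eq_exp_mul_jacobiThetaHalf (x + y)]
  ring

theorem jacobiTheta₂_sq_add_jacobiThetaHalf_sq (hτ : 0 < im τ) (z : ℂ) :
    jacobiTheta₂ z τ ^ 2 + jacobiThetaHalf z τ ^ 2 =
      jacobiTheta₂ z (τ / 2) * jacobiTheta₂ 0 (τ / 2) := by
  rw [jacobiTheta₂_mul_jacobiTheta₂ (by simpa using hτ), mul_div_cancel₀ τ two_ne_zero, add_zero,
    sub_zero, sq, sq]

theorem two_mul_jacobiTheta₂_mul_jacobiThetaHalf (hτ : 0 < im τ) (z : ℂ) :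
    2 * (jacobiTheta₂ z τ * jacobiThetaHalf z τ) =
      jacobiThetaHalf z (τ / 2) * jacobiThetaHalf 0 (τ / 2) := by
  rw [jacobiThetaHalf_mul_jacobiThetaHalf (by simpa using hτ), mul_div_cancel₀ τ two_ne_zero,
    add_zero, sub_zero]
  ring

end Duplication

-- The proportionality of the two functions of `z`, stated as a cross product so that no theta
-- constant has to be shown nonzero.
theorem jacobiTheta₂_sq_add_sq_quarter_period_mul_comm {τ : ℂ} (hτ : 0 < im τ) (z w : ℂ) :
    (jacobiTheta₂ (z + τ / 4) τ ^ 2 + jacobiThetaHalf (z + τ / 4) τ ^ 2) * cexp (π * I * z) *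
        (jacobiTheta₂ w τ * jacobiThetaHalf w τ) =
      (jacobiTheta₂ (w + τ / 4) τ ^ 2 + jacobiThetaHalf (w + τ / 4) τ ^ 2) * cexp (π * I * w) *
        (jacobiTheta₂ z τ * jacobiThetaHalf z τ) := by
  have product_eq (v : ℂ) : 2 * (jacobiTheta₂ v τ * jacobiThetaHalf v τ) =
      cexp (π * I * v) * cexp (π * I * τ / 8) * jacobiTheta₂ (v + τ / 4) (τ / 2) *
        jacobiThetaHalf 0 (τ / 2) := by
    rw [two_mul_jacobiTheta₂_mul_jacobiThetaHalf hτ, jacobiThetaHalf_eq_exp_mul_jacobiTheta₂ v,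
      ← Complex.exp_add]
    ring_nf
  rw [jacobiTheta₂_sq_add_jacobiThetaHalf_sq hτ, jacobiTheta₂_sq_add_jacobiThetaHalf_sq hτ]
  linear_combination
    jacobiTheta₂ 0 (τ / 2) / 2 *
      (jacobiTheta₂ (z + τ / 4) (τ / 2) * cexp (π * I * z) * product_eq w -
        jacobiTheta₂ (w + τ / 4) (τ / 2) * cexp (π * I * w) * product_eq z)

theorem jacobiTheta₂_quarter_period_identity {τ : ℂ} (hτ : 0 < im τ) (z : ℂ) :
    (jacobiTheta₂ (z + τ / 4) τ ^ 2 + jacobiThetaHalf (z + τ / 4) τ ^ 2) *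
        jacobiTheta₂ (1 / 2 + τ / 4) τ ^ 2 =
      cexp (-(π * I * (z + τ / 4))) * jacobiTheta₂ z τ * jacobiThetaHalf z τ *
        jacobiTheta₂ (1 / 2) τ ^ 2 := by
  have exp_half : cexp (π * I * (1 / 2)) = I := by
    rw [mul_one_div, mul_div_right_comm, exp_pi_div_two_mul_I]
  have theta_reflect : jacobiTheta₂ (1 / 2 - τ / 4) τ = jacobiTheta₂ (1 / 2 + τ / 4) τ := by
    rw [← jacobiTheta₂_neg_left, ← jacobiTheta₂_add_left]
    ring_nf
  have half_reflect : jacobiThetaHalf (1 / 2 - τ / 4) τ = I * jacobiTheta₂ (1 / 2 + τ / 4) τ := by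
    rw [jacobiThetaHalf_eq_exp_mul_jacobiTheta₂, sub_add_cancel, exp_half]
    ring_nf
  have exp_sub : cexp (π * I * (1 / 2 - τ / 4)) = I * cexp (-(π * I * τ / 4)) := by
    rw [mul_sub, sub_eq_add_neg, Complex.exp_add, exp_half, mul_div_assoc]
  have exp_mul_exp_neg : cexp (π * I * z) * cexp (-(π * I * (z + τ / 4))) =
      cexp (-(π * I * τ / 4)) := by
    rw [← Complex.exp_add]
    ring_nf
  have comparison := jacobiTheta₂_sq_add_sq_quarter_period_mul_comm hτ z (1 / 2 - τ / 4)
  rw [sub_add_cancel, jacobiThetaHalf_half, theta_reflect, half_reflect, exp_sub] at comparison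
  refine mul_left_cancel₀ (mul_ne_zero I_ne_zero (Complex.exp_ne_zero (π * I * z))) ?_
  linear_combination comparison - I * jacobiTheta₂ z τ * jacobiThetaHalf z τ *
    jacobiTheta₂ (1 / 2) τ ^ 2 * exp_mul_exp_neg

theorem jacobiTheta₂_eq_one_add_tsum_cos {τ : ℂ} (hτ : 0 < im τ) (z : ℂ) :
    jacobiTheta₂ z τ =
      1 + 2 * ∑' n : ℕ, cexp (π * I * (n + 1) ^ 2 * τ) * cos (2 * π * (n + 1) * z) := by
  have paired := (hasSum_jacobiTheta₂_term z hτ).nat_add_neg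
  have term_zero : jacobiTheta₂_term 0 z τ = 1 := by simp [jacobiTheta₂_term]
  have term_pair (n : ℕ) : jacobiTheta₂_term ↑(n + 1) z τ + jacobiTheta₂_term (-↑(n + 1)) z τ =
      2 * (cexp (π * I * (n + 1) ^ 2 * τ) * cos (2 * π * (n + 1) * z)) := by
    rw [mul_left_comm, two_cos, mul_add, ← Complex.exp_add, ← Complex.exp_add, jacobiTheta₂_term,
      jacobiTheta₂_term]
    push_cast
    ring_nf
  have sum_eq := paired.summable.tsum_eq_zero_add
  simp only [paired.tsum_eq, term_pair, tsum_mul_left, Nat.cast_zero, neg_zero, term_zero] at sum_eq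
  linear_combination sum_eq

theorem jacobiThetaHalf_eq_tsum_cos {τ : ℂ} (hτ : 0 < im τ) (z : ℂ) :
    jacobiThetaHalf z τ =
      2 * ∑' n : ℕ, cexp (π * I * (n + 1 / 2) ^ 2 * τ) * cos ((2 * n + 1) * (π * z)) := by
  rw [← (hasSum_jacobiThetaHalf_term z hτ).nat_add_neg_add_one.tsum_eq, ← tsum_mul_left]
  refine tsum_congr fun n ↦ ?_
  rw [mul_left_comm, two_cos, mul_add, ← Complex.exp_add, ← Complex.exp_add, jacobiThetaHalf_term,
    jacobiThetaHalf_term]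
  push_cast
  ring_nf

section Nome

variable {t : ℝ}

theorem cTheta4_exp_neg_pi_mul (ht : 0 < t) (y : ℂ) :
    cTheta4 (Real.exp (-π * t)) y = jacobiTheta₂ (y / π + 1 / 2) (t * I) := by
  rw [cTheta4, jacobiTheta₂_eq_one_add_tsum_cos (by simpa using ht)]
  congr 2
  refine tsum_congr fun n ↦ ?_
  have nome_pow : ((Real.exp (-π * t) : ℝ) : ℂ) ^ ((n + 1) ^ 2) =
      cexp (π * I * (n + 1) ^ 2 * (t * I)) := by
    rw [ofReal_exp, ← Complex.exp_nat_mul]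
    push_cast
    congr 1
    linear_combination -(π * t * (n + 1) ^ 2 : ℂ) * I_sq
  have cos_shift : cos (2 * π * (n + 1) * (y / π + 1 / 2)) =
      (-1) ^ (n + 1) * cos (2 * (n + 1) * y) := by
    rw [← cos_antiperiodic.add_nat_mul_eq]
    push_cast
    field_simp
  rw [nome_pow, cos_shift]
  ring

theorem cTheta1_exp_neg_pi_mul (ht : 0 < t) (y : ℂ) :
    cTheta1 (Real.exp (-π * t)) y = -jacobiThetaHalf (y / π + 1 / 2) (t * I) := by
  rw [cTheta1, jacobiThetaHalf_eq_tsum_cos (by simpa using ht), ← mul_neg, ← tsum_neg]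
  congr 1
  refine tsum_congr fun n ↦ ?_
  have nome_rpow : ((Real.exp (-π * t) ^ ((n : ℝ) + 1 / 2) ^ 2 : ℝ) : ℂ) =
      cexp (π * I * (n + 1 / 2) ^ 2 * (t * I)) := by
    rw [← Real.exp_mul, ofReal_exp]
    push_cast
    congr 1
    linear_combination -(π * t * (n + 1 / 2) ^ 2 : ℂ) * I_sq
  have cos_shift : cos ((2 * n + 1) * (π * (y / π + 1 / 2))) =
      -((-1) ^ n * sin ((2 * n + 1) * y)) := by
    rw [← sin_antiperiodic.add_nat_mul_eq, ← cos_add_pi_div_two]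
    congr 1
    field_simp
    ring
  rw [nome_rpow, cos_shift]
  ring

end Nome

theorem exp_neg_pi_mul_I_mul_add_quarter (t : ℝ) (y : ℂ) :
    cexp (-(π * I * (y / π + 1 / 2 + t * I / 4))) =
      -I * ((Real.exp (-π * t) ^ (-(1 / 4 : ℝ)) : ℝ) : ℂ) * cexp (-(I * y)) := by
  rw [← exp_neg_pi_div_two_mul_I, ← Real.exp_mul, ofReal_exp, ← Complex.exp_add, ← Complex.exp_add]
  push_cast
  congr 1
  field_simp
  linear_combination -(2 * π * t : ℂ) * I_sq

theorem theta_quarter_period_identity_general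
    (q : ℝ) (hq : q ∈ Set.Ioo (0 : ℝ) 1) (τ : ℝ) (hτ : τ = -(Real.log q) / π) (y : ℂ) :
    (cTheta1 q (y + I * π * τ / 4) ^ 2 + cTheta4 q (y + I * π * τ / 4) ^ 2)
        * cTheta4 q (I * π * τ / 4) ^ 2
      = I * ((q ^ (-(1 / 4 : ℝ)) : ℝ) : ℂ) * cexp (-(I * y))
          * cTheta1 q y * cTheta4 q y * cTheta4 q 0 ^ 2 := by
  have τ_pos : 0 < τ := hτ ▸ div_pos (neg_pos.2 (Real.log_neg hq.1 hq.2)) Real.pi_pos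
  obtain rfl : q = Real.exp (-π * τ) := by
    rw [hτ, neg_mul, mul_div_cancel₀ _ Real.pi_ne_zero, neg_neg, Real.exp_log hq.1]
  have quarter_shift (x : ℂ) : (x + I * π * τ / 4) / π + 1 / 2 = x / π + 1 / 2 + τ * I / 4 := by
    field_simp
    ring
  have quarter_shift_zero : I * π * τ / 4 / π + 1 / 2 = 1 / 2 + τ * I / 4 := by
    simpa only [zero_add, zero_div] using quarter_shift 0
  have identity := jacobiTheta₂_quarter_period_identity (τ := τ * I) (by simpa using τ_pos)
    (y / π + 1 / 2)
  rw [exp_neg_pi_mul_I_mul_add_quarter] at identity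
  simp only [cTheta1_exp_neg_pi_mul τ_pos, cTheta4_exp_neg_pi_mul τ_pos, quarter_shift,
    quarter_shift_zero, zero_div, zero_add]
  linear_combination identity

/-- The squared quarter-period translation identity for the Jacobi theta functions:
for `q = e^{−πτ} ∈ (0,1)` and every real `y`,
`(θ₁(y + iπτ/4)² + θ₄(y + iπτ/4)²)·θ₄(iπτ/4)² = i·q^{−1/4}·e^{−iy}·θ₁(y)·θ₄(y)·θ₄(0)²`. -/
theorem theta_quarter_period_identity
    (q : ℝ) (hq : q ∈ Set.Ioo (0 : ℝ) 1) (τ : ℝ) (hτ : τ = -(Real.log q) / Real.pi) :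
    ∀ y : ℝ,
      (cTheta1 q ((y : ℂ) + Complex.I * Real.pi * τ / 4) ^ 2
        + cTheta4 q ((y : ℂ) + Complex.I * Real.pi * τ / 4) ^ 2)
        * cTheta4 q (Complex.I * Real.pi * τ / 4) ^ 2
      = Complex.I * ((q ^ (-(1 / 4 : ℝ)) : ℝ) : ℂ) * Complex.exp (-(Complex.I * y))
          * cTheta1 q y * cTheta4 q y * cTheta4 q 0 ^ 2 := by
  exact fun y ↦ theta_quarter_period_identity_general q hq τ hτ y

end
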